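/- arXiv:0912.0875 — 2 statements merged into one kernel-verified Lean document; each statement's English description precedes it below -/
import Mathlib

section
/- Let G be a finite nonsolvable group. Then T₂(G) ≥ 5·|G : G'|, where T₂(G) is the sum of the degrees of those complex irreducible characters of G whose degree is strictly greater than 2, and G' is the derived (commutator) subgroup of G. -/
/-- `χ : G → ℂ` is an irreducible complex character of the group `G`, i.e. the character
of a simple (irreducible) finite-dimensional complex representation of `G`. -/
def IsIrrChar (G : Type) [Group G] (χ : G → ℂ) : Prop :=
  ∃ V : FDRep ℂ G, CategoryTheory.Simple V ∧ χ = V.character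

/-- `T(G)`: the sum of the degrees (values at the identity) of the complex irreducible
characters of `G`. -/
noncomputable def charDegreeSum (G : Type) [Group G] : ℝ :=
  ∑ᶠ χ ∈ {χ : G → ℂ | IsIrrChar G χ}, (χ 1).re

/-- `T₂(G)`: the sum of the degrees of the complex irreducible characters of `G` of degree
strictly greater than `2`. -/
noncomputable def charDegreeSumGtTwo (G : Type) [Group G] : ℝ :=
  ∑ᶠ χ ∈ {χ : G → ℂ | IsIrrChar G χ ∧ 2 < (χ 1).re}, (χ 1).re

/-!
Suppose that some Sylow `p`-subgroup `P` of `G'` is not normal in `G'`, where `p` is odd. Under the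
conjugation action of `G` on the Sylow `p`-subgroups of `G'`, the group `G'` is transitive and `P`
fixes only the point `P`, so all other `P`-orbits have at least `p` points. Comparing dimensions in
the permutation module, some nontrivial irreducible constituent `U` has `p * dim U^P ≤ dim U`.

Let `χ` be the character of `U` and `X` the stabilizer of the point `P`; then `U^X ≠ 0` and
`G = G'X`. If a linear character `μ` satisfies `μχ = χ`, an isomorphism from `U` to its twist by
`μ⁻¹` maps a nonzero vector of `U^X` to an eigenvector of `X` with eigenvalue `μ|_X`, and this
vector lies in `U^P` because `P ≤ G'`. Distinct `μ` have distinct restrictions to `X`, so these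
eigenvectors are linearly independent and at most `dim U^P ≤ χ(1) / p` linear characters fix `χ`.
The orbit of `χ` under twisting therefore contributes at least `p * |G : G'|` to `T₂(G)`.

Hence, if the bound fails, all Sylow `p`-subgroups of `G'` with `p ≥ 5` are normal. Factoring them
out leaves a `{2, 3}`-group, which is solvable by Burnside's `p^a q^b` theorem.
-/

open Representation Module

section Semisimple
variable {k G V : Type*} [Field k] [Group G] [AddCommGroup V] [Module k V]
  {ρ : Representation k G V}

variable (ρ) in
theorem nontrivial_of_isIrreducible [ρ.IsIrreducible] : Nontrivial V := by
  rw [← not_subsingleton_iff_nontrivial]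
  intro _
  obtain ⟨U, W, hUW⟩ := exists_pair_ne (Subrepresentation ρ)
  exact hUW (Subrepresentation.toSubmodule_injective (Subsingleton.elim _ _))

theorem coe_asAlgebraHom_toRepresentation (U : Subrepresentation ρ) (a : MonoidAlgebra k G)
    (v : U.toSubmodule) : (U.toRepresentation.asAlgebraHom a v : V) = ρ.asAlgebraHom a v := by
  induction a using MonoidAlgebra.induction_linear with
  | zero => simp
  | add a b ha hb => simp [ha, hb]
  | single g c =>
    rw [asAlgebraHom_single, asAlgebraHom_single]
    rfl

theorem isIrreducible_toRepresentation_ofSubmodule'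
    (N : Submodule (MonoidAlgebra k G) ρ.asModule) [IsSimpleModule (MonoidAlgebra k G) N] :
    (Subrepresentation.ofSubmodule' N).toRepresentation.IsIrreducible := by
  rw [irreducible_iff_isSimpleModule_asModule]
  let e : (Subrepresentation.ofSubmodule' N).toRepresentation.asModule ≃ₗ[MonoidAlgebra k G] N :=
    { AddEquiv.refl N with
      map_smul' := fun a v ↦ Subtype.ext (coe_asAlgebraHom_toRepresentation _ a v) }
  exact IsSimpleModule.congr e

theorem exists_finset_irreducible_character_eq_sum [FiniteDimensional k V]
    [IsSemisimpleRepresentation ρ] :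
    ∃ s : Finset (Subrepresentation ρ), (∀ U ∈ s, U.toRepresentation.IsIrreducible) ∧
      ρ.character = ∑ U ∈ s, U.toRepresentation.character := by
  classical
  have := (isSemisimpleRepresentation_iff_isSemisimpleModule_asModule ρ).1 ‹_›
  have : FiniteDimensional k ρ.asModule := inferInstanceAs (FiniteDimensional k V)
  have : IsNoetherian (MonoidAlgebra k G) ρ.asModule := isNoetherian_of_tower k inferInstance
  obtain ⟨s, hind, htop, hs⟩ :=
    IsSemisimpleModule.exists_sSupIndep_sSup_simples_eq_top (MonoidAlgebra k G) ρ.asModule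
  have : Fintype s := (WellFoundedGT.finite_of_sSupIndep hind).fintype
  have hint : DirectSum.IsInternal fun N : s ↦ N.1 :=
    DirectSum.isInternal_submodule_of_iSupIndep_of_iSup_eq_top ((sSupIndep_iff s).1 hind)
      (sSup_eq_iSup' s ▸ htop)
  refine ⟨Finset.univ.map ⟨fun N : s ↦ Subrepresentation.ofSubmodule' N.1, ?_⟩, ?_, ?_⟩
  · exact Subrepresentation.subrepresentationSubmoduleOrderIso.symm.injective.comp
      Subtype.val_injective
  · intro U hU
    simp only [Finset.mem_map, Finset.mem_univ, true_and] at hU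
    obtain ⟨N, rfl⟩ := hU
    have := hs N N.2
    exact isIrreducible_toRepresentation_ofSubmodule' N.1
  · funext g
    rw [Finset.sum_map, Finset.sum_apply]
    exact LinearMap.trace_eq_sum_trace_restrict
      (N := fun N : s ↦ (Subrepresentation.ofSubmodule' N.1).toSubmodule) hint
      fun N _ hv ↦ (Subrepresentation.ofSubmodule' N.1).apply_mem_toSubmodule g hv

end Semisimple

section FixedSpace
variable {k G V : Type*} [Field k] [Group G] [AddCommGroup V] [Module k V]

/-- The subspace `V^H` of the vectors of a representation that are fixed by a subgroup `H`. -/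
noncomputable def fixedSpace (ρ : Representation k G V) (H : Subgroup G) : Submodule k V :=
  invariants (ρ.comp H.subtype)

variable {ρ : Representation k G V} {H : Subgroup G}

theorem mem_fixedSpace {v : V} : v ∈ fixedSpace ρ H ↔ ∀ h ∈ H, ρ h v = v :=
  Subtype.forall (α := G)

theorem fixedSpace_anti {H K : Subgroup G} (h : H ≤ K) : fixedSpace ρ K ≤ fixedSpace ρ H :=
  fun _ hv ↦ mem_fixedSpace.2 fun g hg ↦ mem_fixedSpace.1 hv g (h hg)

theorem fixedSpace_eq_top_of_ne_bot [ρ.IsIrreducible] [H.Normal]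
    (h : fixedSpace ρ H ≠ ⊥) : fixedSpace ρ H = ⊤ := by
  let U : Subrepresentation ρ := ⟨fixedSpace ρ H, fun g _ hv ↦ le_comap_invariants ρ H g hv⟩
  have hU : U = ⊤ := (eq_bot_or_eq_top U).resolve_left fun hbot ↦
    h (congrArg Subrepresentation.toSubmodule hbot)
  exact congrArg Subrepresentation.toSubmodule hU

theorem finrank_fixedSpace_top_of_isIrreducible [ρ.IsIrreducible] :
    finrank k (fixedSpace ρ ⊤) = 0 ∨ ∀ H, finrank k (fixedSpace ρ H) = finrank k V := by
  rcases eq_or_ne (fixedSpace ρ ⊤) ⊥ with hbot | hbot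
  · exact .inl (hbot ▸ finrank_bot k V)
  · refine .inr fun H ↦ ?_
    rw [eq_top_iff.2 ((fixedSpace_eq_top_of_ne_bot hbot).ge.trans (fixedSpace_anti le_top)),
      finrank_top]

section Character
variable [CharZero k] [FiniteDimensional k V]

theorem card_mul_finrank_fixedSpace [Fintype H] :
    (Nat.card H : k) * finrank k (fixedSpace ρ H) = ∑ h : H, ρ.character h := by
  have hcard : (Nat.card H : k) ≠ 0 := NeZero.ne _
  have := invertibleOfNonzero hcard
  rw [fixedSpace, ← card_inv_mul_sum_char_eq_finrank, mul_inv_cancel_left₀ hcard]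
  rfl

variable {s : Finset (Subrepresentation ρ)}

theorem finrank_eq_sum_of_character_eq_sum
    (hs : ρ.character = ∑ U ∈ s, U.toRepresentation.character) :
    finrank k V = ∑ U ∈ s, finrank k U.toSubmodule := by
  rw [← Nat.cast_inj (R := k), ← char_one ρ, hs]
  simp only [Finset.sum_apply, char_one, Nat.cast_sum]

variable [Finite G]

theorem finrank_fixedSpace_eq_sum (hs : ρ.character = ∑ U ∈ s, U.toRepresentation.character)
    (H : Subgroup G) :
    finrank k (fixedSpace ρ H) = ∑ U ∈ s, finrank k (fixedSpace U.toRepresentation H) := by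
  have := Fintype.ofFinite H
  have hcard : (Nat.card H : k) ≠ 0 := NeZero.ne _
  rw [← Nat.cast_inj (R := k), ← mul_right_inj' hcard, card_mul_finrank_fixedSpace, hs]
  simp only [Nat.cast_sum, Finset.mul_sum, card_mul_finrank_fixedSpace, Finset.sum_apply]
  exact Finset.sum_comm

-- `h` is `p * (dim V^H - dim V^G) ≤ dim V - dim V^G`, stated without truncated subtraction.
theorem exists_irreducible_mul_finrank_fixedSpace_le {p : ℕ}
    (h : p * finrank k (fixedSpace ρ H) + finrank k (fixedSpace ρ ⊤)
      ≤ finrank k V + p * finrank k (fixedSpace ρ ⊤))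
    (hlt : finrank k (fixedSpace ρ ⊤) < finrank k V) :
    ∃ U : Subrepresentation ρ, U.toRepresentation.IsIrreducible ∧
      p * finrank k (fixedSpace U.toRepresentation H) ≤ finrank k U.toSubmodule := by
  obtain ⟨s, hirr, hs⟩ := exists_finset_irreducible_character_eq_sum (ρ := ρ)
  rw [finrank_fixedSpace_eq_sum hs, finrank_eq_sum_of_character_eq_sum hs] at hlt
  obtain ⟨U₀, hU₀, hlt⟩ := Finset.exists_lt_of_sum_lt hlt
  by_contra! hcon
  refine h.not_gt ?_
  rw [finrank_fixedSpace_eq_sum hs, finrank_fixedSpace_eq_sum hs,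
    finrank_eq_sum_of_character_eq_sum hs]
  simp only [Finset.mul_sum, ← Finset.sum_add_distrib]
  refine Finset.sum_lt_sum (fun U hU ↦ ?_) ⟨U₀, hU₀, ?_⟩
  · have := hirr U hU
    rcases finrank_fixedSpace_top_of_isIrreducible (ρ := U.toRepresentation) with hzero | hfull
    · simpa only [hzero, mul_zero, add_zero] using (hcon U this).le
    · rw [hfull, hfull, add_comm]
  · have := hirr U₀ hU₀
    rcases finrank_fixedSpace_top_of_isIrreducible (ρ := U₀.toRepresentation) with hzero | hfull
    · simpa only [hzero, mul_zero, add_zero] using hcon U₀ this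
    · exact absurd (hfull ⊤) hlt.ne

end Character

section OfMulAction
variable {Ω : Type*} [MulAction G Ω] [Finite Ω]

theorem character_ofMulAction (g : G) :
    (ofMulAction k G Ω).character g = Nat.card (MulAction.fixedBy Ω g) := by
  classical
  have := Fintype.ofFinite Ω
  rw [character, LinearMap.trace_eq_matrix_trace k (MonoidAlgebra.basis Ω k),
    Nat.card_eq_fintype_card, Fintype.card_subtype]
  simp [Matrix.trace, LinearMap.toMatrix_apply, MonoidAlgebra.basis, Finsupp.single_apply,
    MulAction.mem_fixedBy]

theorem finrank_fixedSpace_ofMulAction [CharZero k] [Finite H] :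
    finrank k (fixedSpace (ofMulAction k G Ω) H) = Nat.card (MulAction.orbitRel.Quotient H Ω) := by
  classical
  have := Fintype.ofFinite H
  have := Fintype.ofFinite Ω
  have hcard : (Nat.card H : k) ≠ 0 := NeZero.ne _
  rw [← Nat.cast_inj (R := k), ← mul_right_inj' hcard, card_mul_finrank_fixedSpace]
  simp only [character_ofMulAction]
  have := Fintype.ofFinite (MulAction.orbitRel.Quotient H Ω)
  have hburnside := MulAction.sum_card_fixedBy_eq_card_orbits_mul_card_group H Ω
  simp only [← Nat.card_eq_fintype_card] at hburnside
  rw [mul_comm, ← Nat.cast_mul, ← hburnside, Nat.cast_sum]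
  rfl

end OfMulAction

end FixedSpace

section Counting
variable {P Ω : Type*} [Group P] [MulAction P Ω]

theorem le_card_orbit_of_notMem_fixedPoints [Finite Ω] {p : ℕ} [Fact p.Prime] (hP : IsPGroup p P)
    {ω : Ω} (hω : ω ∉ MulAction.fixedPoints P Ω) : p ≤ Nat.card (MulAction.orbit P ω) := by
  obtain ⟨n, hn⟩ := hP.card_orbit ω
  rw [hn]
  refine Nat.le_self_pow (fun h0 ↦ hω ?_) p
  have := Fintype.ofFinite (MulAction.orbit P ω)
  rw [MulAction.mem_fixedPoints_iff_card_orbit_eq_one, ← Nat.card_eq_fintype_card, hn, h0, pow_zero]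

theorem mul_card_orbits_add_card_fixedPoints_le [Finite Ω] {p : ℕ} [Fact p.Prime]
    (hP : IsPGroup p P) :
    p * Nat.card (MulAction.orbitRel.Quotient P Ω) + Nat.card (MulAction.fixedPoints P Ω)
      ≤ Nat.card Ω + p * Nat.card (MulAction.fixedPoints P Ω) := by
  classical
  have := Fintype.ofFinite Ω
  have := Fintype.ofFinite (MulAction.orbitRel.Quotient P Ω)
  let π : Ω → MulAction.orbitRel.Quotient P Ω := Quotient.mk''
  let F : Finset Ω := {ω | ω ∈ MulAction.fixedPoints P Ω}
  have hF : Nat.card (MulAction.fixedPoints P Ω) = F.card := by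
    rw [Nat.card_eq_fintype_card, Fintype.card_subtype]
  have hfiber : ∀ b ∈ Fᶜ.image π, p ≤ Finset.card {a ∈ Fᶜ | π a = b} := by
    simp only [Finset.mem_image, forall_exists_index, and_imp]
    rintro _ ω hω rfl
    have hω : ω ∉ MulAction.fixedPoints P Ω := by simpa [F] using hω
    refine (le_card_orbit_of_notMem_fixedPoints hP hω).trans ?_
    rw [← Set.ncard_coe_finset, ← Nat.card_coe_set_eq]
    refine Nat.card_mono (Set.toFinite _) fun a ha ↦ ?_
    have haF : a ∉ MulAction.fixedPoints P Ω := fun hfix ↦ by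
      obtain ⟨g, hg⟩ := MulAction.mem_orbit_symm.1 ha
      exact hω ((hg.symm.trans (hfix g)) ▸ hfix)
    exact Finset.mem_filter.2 ⟨by simpa [F] using haF, Quotient.sound' ha⟩
  have hcover : Nat.card (MulAction.orbitRel.Quotient P Ω) ≤ F.card + (Fᶜ.image π).card := by
    rw [Nat.card_eq_fintype_card, ← Finset.card_univ]
    have : Finset.univ = F.image π ∪ Fᶜ.image π := by
      rw [← Finset.image_union, Finset.union_compl,
        Finset.image_univ_of_surjective Quotient.mk''_surjective]
    rw [this]
    exact (Finset.card_union_le _ _).trans (Nat.add_le_add_right Finset.card_image_le _)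
  have himage := Finset.mul_card_image_le_card Fᶜ p hfiber
  have hcompl := F.card_add_card_compl
  rw [hF, Nat.card_eq_fintype_card (α := Ω)]
  have := Nat.mul_le_mul_left p hcover
  rw [mul_add] at this
  omega

end Counting

section OfMulAction
variable {k G Ω : Type*} [Field k] [Group G] [MulAction G Ω]

theorem exists_coeff_ne_zero_of_ne_bot [MulAction.IsPretransitive G Ω]
    {U : Subrepresentation (ofMulAction k G Ω)} (hU : U ≠ ⊥) (ω : Ω) :
    ∃ f ∈ U, f.coeff ω ≠ 0 := by
  by_contra! h
  refine hU (le_bot_iff.1 fun f hf ↦ ?_)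
  suffices f = 0 from this ▸ zero_mem (⊥ : Submodule k (MonoidAlgebra k Ω))
  ext ω'
  obtain ⟨g, rfl⟩ := MulAction.exists_smul_eq G ω ω'
  simpa [coeff_ofMulAction] using h _ (U.apply_mem_toSubmodule g⁻¹ hf)

theorem fixedSpace_stabilizer_ne_bot_of_ne_bot [CharZero k] [Finite G]
    [MulAction.IsPretransitive G Ω] {U : Subrepresentation (ofMulAction k G Ω)} (hU : U ≠ ⊥)
    (ω : Ω) :
    fixedSpace U.toRepresentation (MulAction.stabilizer G ω) ≠ ⊥ := by
  classical
  have := Fintype.ofFinite (MulAction.stabilizer G ω)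
  obtain ⟨f, hf, hfω⟩ := exists_coeff_ne_zero_of_ne_bot hU ω
  let σ : Representation k (MulAction.stabilizer G ω) U.toSubmodule :=
    U.toRepresentation.comp (MulAction.stabilizer G ω).subtype
  refine (Submodule.ne_bot_iff _).2 ⟨σ.norm ⟨f, hf⟩, fun h ↦ self_norm_apply σ h _, fun hzero ↦ ?_⟩
  have hcoeff : (σ.norm ⟨f, hf⟩ : MonoidAlgebra k Ω).coeff ω
      = Fintype.card (MulAction.stabilizer G ω) * f.coeff ω := by
    have hfixed (h : MulAction.stabilizer G ω) :
        (σ h ⟨f, hf⟩ : MonoidAlgebra k Ω).coeff ω = f.coeff ω :=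
      (coeff_ofMulAction (h : G) f ω).trans (by rw [inv_smul_eq_iff.2 h.2.symm])
    simp [Representation.norm, hfixed]
  rw [hzero] at hcoeff
  exact mul_ne_zero (Nat.cast_ne_zero.2 Fintype.card_ne_zero) hfω hcoeff.symm

end OfMulAction

section IrrChar
variable {G : Type} [Group G] {χ ψ : G → ℂ}

theorem IsIrrChar.sum_mul_apply_inv [Fintype G] [Decidable (χ = ψ)] (hχ : IsIrrChar G χ)
    (hψ : IsIrrChar G ψ) : ∑ g, χ g * ψ g⁻¹ = if χ = ψ then (Nat.card G : ℂ) else 0 := by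
  have hcard : (Nat.card G : ℂ) ≠ 0 := NeZero.ne _
  have := invertibleOfNonzero hcard
  obtain ⟨V, hV, rfl⟩ := hχ
  obtain ⟨W, hW, rfl⟩ := hψ
  split_ifs with heq
  · exact heq ▸ (FDRep.simple_iff_char_is_norm_one V).1 hV
  · have h := FDRep.char_orthonormal V W
    rw [if_neg fun ⟨e⟩ ↦ heq (FDRep.char_iso e)] at h
    simpa [hcard] using h

variable [Finite G]

theorem isIrrChar_character {V : Type} [AddCommGroup V] [Module ℂ V] [FiniteDimensional ℂ V]
    (ρ : Representation ℂ G V) [ρ.IsIrreducible] : IsIrrChar G ρ.character := by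
  have := Fintype.ofFinite G
  have hcard : (Nat.card G : ℂ) ≠ 0 := NeZero.ne _
  have := invertibleOfNonzero hcard
  have h := char_orthonormal ρ ρ
  rw [if_pos ⟨Representation.Equiv.refl ρ⟩, inv_mul_eq_one₀ hcard] at h
  exact ⟨FDRep.of ρ, (FDRep.simple_iff_char_is_norm_one _).2 h.symm, rfl⟩

theorem IsIrrChar.apply_one_ne_zero (hχ : IsIrrChar G χ) : χ 1 ≠ 0 := by
  have := Fintype.ofFinite G
  classical
  intro h
  have hnorm := hχ.sum_mul_apply_inv hχ
  obtain ⟨V, -, rfl⟩ := hχ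
  rw [FDRep.char_one, Nat.cast_eq_zero, finrank_eq_zero_iff_of_free] at h
  simp [FDRep.character, Subsingleton.elim _ (0 : Module.End ℂ V), eq_comm] at hnorm

theorem character_leftRegular {k : Type*} [Field k] {G : Type*} [Group G] [Finite G] [DecidableEq G]
    (g : G) : (leftRegular k G).character g = if g = 1 then (Nat.card G : k) else 0 := by
  rw [character_ofMulAction]
  split_ifs with hg
  · simp [hg, MulAction.fixedBy]
  · simp [MulAction.fixedBy, hg]

theorem IsIrrChar.card_filter_character_eq [DecidableEq (G → ℂ)] (hχ : IsIrrChar G χ)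
    {s : Finset (Subrepresentation (leftRegular ℂ G))}
    (hirr : ∀ U ∈ s, U.toRepresentation.IsIrreducible)
    (hs : (leftRegular ℂ G).character = ∑ U ∈ s, U.toRepresentation.character) :
    (Finset.card {U ∈ s | U.toRepresentation.character = χ} : ℂ) = χ 1 := by
  have := Fintype.ofFinite G
  have hcard : (Nat.card G : ℂ) ≠ 0 := NeZero.ne _
  have hpair : ∀ U ∈ s, ∑ g, U.toRepresentation.character g * χ g⁻¹
      = if U.toRepresentation.character = χ then (Nat.card G : ℂ) else 0 := fun U hU ↦
    have := hirr U hU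
    (isIrrChar_character U.toRepresentation).sum_mul_apply_inv hχ
  refine mul_left_cancel₀ hcard ?_
  calc _ = ∑ U ∈ s, ∑ g, U.toRepresentation.character g * χ g⁻¹ := by
        rw [Finset.sum_congr rfl hpair, ← Finset.sum_filter, Finset.sum_const, nsmul_eq_mul,
          mul_comm]
    _ = ∑ g, (leftRegular ℂ G).character g * χ g⁻¹ := by
        rw [Finset.sum_comm, hs]
        simp only [Finset.sum_apply, Finset.sum_mul]
    _ = Nat.card G * χ 1 := by
        classical simp [character_leftRegular]

theorem IsIrrChar.exists_subrepresentation_leftRegular (hχ : IsIrrChar G χ)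
    {s : Finset (Subrepresentation (leftRegular ℂ G))}
    (hirr : ∀ U ∈ s, U.toRepresentation.IsIrreducible)
    (hs : (leftRegular ℂ G).character = ∑ U ∈ s, U.toRepresentation.character) :
    ∃ U ∈ s, U.toRepresentation.character = χ := by
  classical
  have h := hχ.card_filter_character_eq hirr hs
  by_contra! hne
  rw [Finset.filter_false_of_mem hne, Finset.card_empty, Nat.cast_zero] at h
  exact hχ.apply_one_ne_zero h.symm

theorem IsIrrChar.exists_isIrreducible (hχ : IsIrrChar G χ) :
    ∃ U : Subrepresentation (leftRegular ℂ G),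
      U.toRepresentation.IsIrreducible ∧ U.toRepresentation.character = χ := by
  obtain ⟨s, hirr, hs⟩ := exists_finset_irreducible_character_eq_sum (ρ := leftRegular ℂ G)
  obtain ⟨U, hU, hUχ⟩ := hχ.exists_subrepresentation_leftRegular hirr hs
  exact ⟨U, hirr U hU, hUχ⟩

variable (G) in
theorem finite_setOf_isIrrChar : {χ : G → ℂ | IsIrrChar G χ}.Finite := by
  classical
  obtain ⟨s, hirr, hs⟩ := exists_finset_irreducible_character_eq_sum (ρ := leftRegular ℂ G)
  refine (s.image fun U ↦ U.toRepresentation.character).finite_toSet.subset fun χ hχ ↦ ?_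
  exact Finset.mem_image.2 (IsIrrChar.exists_subrepresentation_leftRegular hχ hirr hs)

theorem sum_isIrrChar_apply_one_mul_apply_eq_zero {g : G} (hg : g ≠ 1) :
    ∑ χ ∈ (finite_setOf_isIrrChar G).toFinset, χ 1 * χ g = 0 := by
  classical
  obtain ⟨s, hirr, hs⟩ := exists_finset_irreducible_character_eq_sum (ρ := leftRegular ℂ G)
  have himage : (finite_setOf_isIrrChar G).toFinset
      = s.image fun U ↦ U.toRepresentation.character := by
    ext χ
    rw [Set.Finite.mem_toFinset, Finset.mem_image]
    refine ⟨fun hχ ↦ IsIrrChar.exists_subrepresentation_leftRegular hχ hirr hs, ?_⟩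
    rintro ⟨U, hU, rfl⟩
    have := hirr U hU
    exact isIrrChar_character U.toRepresentation
  calc ∑ χ ∈ (finite_setOf_isIrrChar G).toFinset, χ 1 * χ g
    _ = ∑ U ∈ s, U.toRepresentation.character g := by
      rw [himage]
      refine Eq.trans (Finset.sum_congr rfl fun χ hχ ↦ ?_)
        (Finset.sum_comp (fun χ : G → ℂ ↦ χ g) _).symm
      rw [nsmul_eq_mul, ← IsIrrChar.card_filter_character_eq (χ := χ) ?_ hirr hs]
      rwa [← himage, Set.Finite.mem_toFinset] at hχ
    _ = (leftRegular ℂ G).character g := by rw [hs, Finset.sum_apply]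
    _ = 0 := by rw [character_leftRegular, if_neg hg]

end IrrChar

/-- The action of the group of linear characters on functions by pointwise multiplication. -/
abbrev linearCharMulAction (k G : Type*) [Field k] [Group G] :
    MulAction (G →* kˣ) (G → k) :=
  MulAction.compHom (G → k) (MonoidHom.coeFn G kˣ)

attribute [local instance] linearCharMulAction

section Twist
variable {k G V : Type*} [Field k] [Group G] [AddCommGroup V] [Module k V]

/-- The twist of a representation by a linear character, that is, the tensor product with a
one-dimensional representation. -/
def linearTwist (ρ : Representation k G V) (μ : G →* kˣ) : Representation k G V where
  toFun g := (μ g : k) • ρ g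
  map_one' := by simp
  map_mul' g h := by ext v; simp [smul_smul, mul_comm]

theorem linearChar_smul_apply (μ : G →* kˣ) (f : G → k) (g : G) : (μ • f) g = μ g * f g := rfl

theorem character_linearTwist (ρ : Representation k G V) (μ : G →* kˣ) :
    (linearTwist ρ μ).character = μ • ρ.character :=
  funext fun g ↦ map_smul (LinearMap.trace k V) (μ g : k) (ρ g)

theorem card_monoidHom_units_eq_index_commutator (G M : Type*) [Group G] [Finite G] [CommMonoid M]
    [HasEnoughRootsOfUnity M (Monoid.exponent (Abelianization G))] :
    Nat.card (G →* Mˣ) = (commutator G).index := by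
  rw [← Nat.card_congr (Abelianization.lift (A := Mˣ)).symm,
    CommGroup.card_monoidHom_of_hasEnoughRootsOfUnity]
  rfl

theorem linearIndependent_of_apply_eq_smul {ι : Type*} {ρ : Representation k G V} {χ : ι → G →* k}
    (hχ : Function.Injective χ) {w : ι → V} (hw₀ : ∀ i, w i ≠ 0)
    (hw : ∀ i g, ρ g (w i) = χ i g • w i) : LinearIndependent k w := by
  rw [linearIndependent_iff']
  intro s c hc i hi
  obtain ⟨φ, hφ⟩ : ∃ φ : Dual k V, φ (w i) ≠ 0 := by
    simpa using (Module.forall_dual_apply_eq_zero_iff k (w i)).not.2 (hw₀ i)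
  have hsum : ∑ j ∈ s, (c j * φ (w j)) • (χ j : G → k) = 0 := by
    ext g
    have h : φ (ρ g (∑ j ∈ s, c j • w j)) = 0 := by simp [hc]
    simpa [hw, mul_assoc, mul_comm, mul_left_comm] using h
  have := linearIndependent_iff'.1 ((linearIndependent_monoidHom G k).comp χ hχ) s _ hsum i hi
  exact (mul_eq_zero.1 this).resolve_right hφ

theorem monoidHom_ext_of_commutator_sup_eq_top {A : Type*} [CommGroup A] {X : Subgroup G}
    (hX : commutator G ⊔ X = ⊤) {μ ν : G →* A} (h : ∀ x ∈ X, μ x = ν x) : μ = ν := by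
  have hle : commutator G ⊔ X ≤ μ.eqLocus ν := sup_le (fun g hg ↦
    (Abelianization.commutator_subset_ker μ hg).trans
      (Abelianization.commutator_subset_ker ν hg).symm) h
  exact MonoidHom.ext fun g ↦ hle (hX ▸ Subgroup.mem_top g)

variable [IsAlgClosed k] [CharZero k] [Finite G] [FiniteDimensional k V]
  {ρ : Representation k G V} [ρ.IsIrreducible] {X P : Subgroup G}

theorem exists_apply_eq_smul_of_smul_character_eq {μ : G →* kˣ}
    (hμ : μ • ρ.character = ρ.character) (hX : fixedSpace ρ X ≠ ⊥) :
    ∃ w ≠ 0, ∀ x ∈ X, ρ x w = (μ x : k) • w := by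
  have := Fintype.ofFinite G
  have := invertibleOfNonzero (NeZero.ne (Nat.card G : k))
  have hinv : (linearTwist ρ μ⁻¹).character = ρ.character :=
    (character_linearTwist ρ _).trans (inv_smul_eq_iff.2 hμ.symm)
  have hfinrank : finrank k (IntertwiningMap ρ (linearTwist ρ μ⁻¹)) = 1 := by
    rw [← Nat.cast_inj (R := k), ← card_inv_mul_sum_char_mul_char_eq_finrank, hinv,
      char_orthonormal, if_pos ⟨Representation.Equiv.refl ρ⟩, Nat.cast_one]
  have := Module.nontrivial_of_finrank_pos (hfinrank ▸ one_pos)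
  obtain ⟨T, hT⟩ := exists_ne (0 : IntertwiningMap ρ (linearTwist ρ μ⁻¹))
  have hTinj := (IsIrreducible.injective_or_eq_zero T).resolve_right hT
  obtain ⟨v, hv, hv₀⟩ := (Submodule.ne_bot_iff _).1 hX
  refine ⟨T v, (map_ne_zero_iff T.toLinearMap hTinj).2 hv₀, fun x hx ↦ ?_⟩
  have h : T (ρ x v) = ((μ x)⁻¹ : kˣ) • ρ x (T v) := LinearMap.congr_fun (T.isIntertwining' x) v
  rw [mem_fixedSpace.1 hv x hx, eq_inv_smul_iff] at h
  exact h.symm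

theorem card_stabilizer_character_le_finrank_fixedSpace (hPX : P ≤ X) (hP : P ≤ commutator G)
    (hX : commutator G ⊔ X = ⊤) (hfixed : fixedSpace ρ X ≠ ⊥) :
    Nat.card (MulAction.stabilizer (G →* kˣ) ρ.character) ≤ finrank k (fixedSpace ρ P) := by
  let S := MulAction.stabilizer (G →* kˣ) ρ.character
  choose w hw₀ hw using fun μ : S ↦ exists_apply_eq_smul_of_smul_character_eq μ.2 hfixed
  have hwP (μ : S) : w μ ∈ fixedSpace ρ P := mem_fixedSpace.2 fun g hg ↦ by
    rw [hw μ g (hPX hg), Abelianization.commutator_subset_ker μ.1 (hP hg), Units.val_one, one_smul]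
  have hinj : Function.Injective fun μ : S ↦ ((Units.coeHom k).comp μ.1).comp X.subtype := by
    intro μ ν h
    refine Subtype.ext (monoidHom_ext_of_commutator_sup_eq_top hX fun x hx ↦ Units.ext ?_)
    exact DFunLike.congr_fun h ⟨x, hx⟩
  have hli : LinearIndependent k w :=
    linearIndependent_of_apply_eq_smul (ρ := ρ.comp X.subtype) hinj hw₀ fun μ x ↦ hw μ x x.2
  have hliP : LinearIndependent k fun μ : S ↦ (⟨w μ, hwP μ⟩ : fixedSpace ρ P) :=
    .of_comp (fixedSpace ρ P).subtype hli
  have := hliP.finite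
  have := Fintype.ofFinite S
  exact (Nat.card_eq_fintype_card (α := S)).trans_le hliP.fintype_card_le_finrank

end Twist

section TwistOrbit
variable {G : Type} [Group G] [Finite G] {χ : G → ℂ}

theorem IsIrrChar.linearChar_smul (hχ : IsIrrChar G χ) (μ : G →* ℂˣ) : IsIrrChar G (μ • χ) := by
  have := Fintype.ofFinite G
  have hnorm := hχ.sum_mul_apply_inv hχ
  obtain ⟨V, -, rfl⟩ := hχ
  refine ⟨FDRep.of (linearTwist V.ρ μ), (FDRep.simple_iff_char_is_norm_one _).2 ?_,
    (character_linearTwist V.ρ μ).symm⟩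
  rw [if_pos rfl] at hnorm
  rw [← hnorm]
  refine Finset.sum_congr rfl fun g _ ↦ ?_
  change (linearTwist V.ρ μ).character g * (linearTwist V.ρ μ).character g⁻¹ = _
  simp only [character_linearTwist, linearChar_smul_apply]
  rw [mul_mul_mul_comm, map_inv, Units.mul_inv, one_mul]
  rfl

theorem mul_index_commutator_le_charDegreeSumGtTwo (hχ : IsIrrChar G χ) {r : ℝ} (hr : 2 < r)
    (h : r * Nat.card (MulAction.stabilizer (G →* ℂˣ) χ) ≤ (χ 1).re) :
    r * (commutator G).index ≤ charDegreeSumGtTwo G := by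
  set S := MulAction.stabilizer (G →* ℂˣ) χ
  have hS : 1 ≤ Nat.card S := by
    have : Finite (G →* ℂˣ) := Nat.finite_of_card_ne_zero
      (card_monoidHom_units_eq_index_commutator G ℂ ▸ Subgroup.index_ne_zero_of_finite)
    exact Nat.card_pos
  have hdeg : 2 < (χ 1).re := by
    have : (1 : ℝ) ≤ Nat.card S := Nat.one_le_cast.2 hS
    nlinarith
  have hdegree (ψ) (hψ : ψ ∈ MulAction.orbit (G →* ℂˣ) χ) : ψ 1 = χ 1 := by
    obtain ⟨μ, rfl⟩ := hψ
    simp [linearChar_smul_apply]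
  have hsub : MulAction.orbit (G →* ℂˣ) χ ⊆ {ψ | IsIrrChar G ψ ∧ 2 < (ψ 1).re} := by
    intro ψ hψ
    refine ⟨?_, hdegree ψ hψ ▸ hdeg⟩
    obtain ⟨μ, rfl⟩ := hψ
    exact hχ.linearChar_smul μ
  have hfin : {ψ | IsIrrChar G ψ ∧ 2 < (ψ 1).re}.Finite :=
    (finite_setOf_isIrrChar G).subset fun ψ hψ ↦ hψ.1
  have horb := hfin.subset hsub
  calc r * (commutator G).index
    _ = (r * Nat.card S) * horb.toFinset.card := by
      rw [← card_monoidHom_units_eq_index_commutator G ℂ, ← Subgroup.card_mul_index S,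
        MulAction.index_stabilizer, Set.ncard_eq_toFinset_card _ horb, Nat.cast_mul, mul_assoc]
    _ ≤ horb.toFinset.card * (χ 1).re := by
      rw [mul_comm]
      exact mul_le_mul_of_nonneg_left h (Nat.cast_nonneg _)
    _ = ∑ ψ ∈ horb.toFinset, (ψ 1).re := by
      rw [Finset.sum_congr rfl fun ψ hψ ↦ by rw [hdegree ψ (horb.mem_toFinset.1 hψ)],
        Finset.sum_const, nsmul_eq_mul]
    _ ≤ ∑ ψ ∈ hfin.toFinset, (ψ 1).re := by
      refine Finset.sum_le_sum_of_subset_of_nonneg (Set.Finite.toFinset_subset_toFinset.2 hsub)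
        fun ψ hψ _ ↦ ?_
      linarith [(hfin.mem_toFinset.1 hψ).2]
    _ = charDegreeSumGtTwo G := (finsum_mem_eq_finite_toFinset_sum _ hfin).symm

end TwistOrbit

theorem sup_stabilizer_eq_top {G Ω : Type*} [Group G] [MulAction G Ω] (N : Subgroup G)
    [MulAction.IsPretransitive N Ω] (ω : Ω) : N ⊔ MulAction.stabilizer G ω = ⊤ := by
  refine eq_top_iff.2 fun g _ ↦ ?_
  obtain ⟨n, hn⟩ := MulAction.exists_smul_eq N (g • ω) ω
  have hstab : (n : G) * g ∈ MulAction.stabilizer G ω := (mul_smul (n : G) g ω).trans hn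
  rw [← inv_mul_cancel_left (n : G) g]
  exact Subgroup.mul_mem_sup (inv_mem n.2) hstab

theorem prime_mul_index_commutator_le_of_fixedPoints_eq_singleton {G : Type} [Group G] [Finite G]
    {Ω : Type} [MulAction G Ω] [Finite Ω] [Nontrivial Ω] {p : ℕ} [Fact p.Prime] (hp : 2 < p)
    (htrans : MulAction.IsPretransitive (commutator G) Ω) {P : Subgroup G} (hP : IsPGroup p P)
    (hPG : P ≤ commutator G) {ω : Ω} (hω : MulAction.fixedPoints P Ω = {ω}) :
    p * (commutator G).index ≤ charDegreeSumGtTwo G := by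
  have : MulAction.IsPretransitive G Ω := .of_smul_eq (commutator G).subtype rfl
  have hPω : P ≤ MulAction.stabilizer G ω := fun x hx ↦
    (hω ▸ Set.mem_singleton ω : ω ∈ MulAction.fixedPoints P Ω) ⟨x, hx⟩
  have hdim : finrank ℂ (MonoidAlgebra ℂ Ω) = Nat.card Ω := by
    rw [← Nat.cast_inj (R := ℂ), ← char_one (ofMulAction ℂ G Ω), character_ofMulAction,
      MulAction.fixedBy_one_eq_univ, Nat.card_univ]
  have htop : finrank ℂ (fixedSpace (ofMulAction ℂ G Ω) ⊤) = 1 := by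
    have : MulAction.IsPretransitive (⊤ : Subgroup G) Ω := .of_smul_eq (⟨·, trivial⟩ : G → _) rfl
    rw [finrank_fixedSpace_ofMulAction, Nat.card_eq_one_iff_unique]
    exact ⟨(MulAction.pretransitive_iff_subsingleton_quotient _ _).1 this, ⟨Quotient.mk _ ω⟩⟩
  obtain ⟨U, hU, hUp⟩ := exists_irreducible_mul_finrank_fixedSpace_le
    (ρ := ofMulAction ℂ G Ω) (H := P) (p := p)
    (by
      rw [htop, hdim, finrank_fixedSpace_ofMulAction]
      simpa [hω] using mul_card_orbits_add_card_fixedPoints_le (Ω := Ω) hP)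
    (by rw [htop, hdim]; exact Finite.one_lt_card)
  have hU₀ : U ≠ ⊥ := by
    rintro rfl
    exact not_subsingleton_iff_nontrivial.2 (nontrivial_of_isIrreducible
      (Subrepresentation.toRepresentation (⊥ : Subrepresentation (ofMulAction ℂ G Ω))))
      (inferInstanceAs (Subsingleton (⊥ : Submodule ℂ (MonoidAlgebra ℂ Ω))))
  have hstab : Nat.card (MulAction.stabilizer (G →* ℂˣ) U.toRepresentation.character)
      ≤ finrank ℂ (fixedSpace U.toRepresentation P) :=
    card_stabilizer_character_le_finrank_fixedSpace hPω hPG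
      (sup_stabilizer_eq_top (commutator G) ω) (fixedSpace_stabilizer_ne_bot_of_ne_bot hU₀ ω)
  refine mul_index_commutator_le_charDegreeSumGtTwo (isIrrChar_character U.toRepresentation)
    (by exact_mod_cast hp) ?_
  rw [char_one, Complex.natCast_re]
  exact_mod_cast (Nat.mul_le_mul_left p hstab).trans hUp

theorem fixedPoints_sylow_eq_singleton {p : ℕ} {G : Type*} [Group G] (P : Sylow p G) :
    MulAction.fixedPoints P (Sylow p G) = {P} := by
  ext Q
  rw [P.isPGroup'.sylow_mem_fixedPoints_iff, Set.mem_singleton_iff]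
  exact ⟨fun h ↦ Sylow.ext (P.is_maximal' Q.isPGroup' h), fun h ↦ h ▸ le_rfl⟩

theorem prime_mul_index_commutator_le_of_not_normal_sylow {G : Type} [Group G] [Finite G] {p : ℕ}
    [Fact p.Prime] (hp : 2 < p) (P : Sylow p (commutator G))
    (hP : ¬ (P : Subgroup (commutator G)).Normal) :
    p * (commutator G).index ≤ charDegreeSumGtTwo G := by
  have hconj {x : commutator G} {Q : Sylow p (commutator G)} :
      x • Q = (MulAut.conjNormal (x : G) : MulAut (commutator G)) • Q := by
    rw [Sylow.smul_def, ← MulAut.conjNormal_val]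
  have hsylow : MulAction.IsPretransitive (commutator G) (Sylow p (commutator G)) := inferInstance
  have hfixed := fixedPoints_sylow_eq_singleton P
  have : Nontrivial (Sylow p (commutator G)) := by
    rw [← not_subsingleton_iff_nontrivial]
    exact fun _ ↦ hP P.normal_of_subsingleton
  let _ : MulAction G (Sylow p (commutator G)) :=
    MulAction.compHom _ (MulAut.conjNormal (H := commutator G))
  refine prime_mul_index_commutator_le_of_fixedPoints_eq_singleton (ω := P) hp
    (hsylow.of_smul_eq id hconj.symm) (P.isPGroup'.map (commutator G).subtype)
    (Subgroup.map_subtype_le _) ?_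
  rw [← hfixed]
  ext Q
  refine ⟨fun h x ↦ ?_, ?_⟩
  · exact hconj.trans (h ⟨x, Subgroup.mem_map_of_mem _ x.2⟩)
  · rintro h ⟨_, x, hx, rfl⟩
    exact hconj.symm.trans (h ⟨x, hx⟩)

section RootsOfUnity
variable {ι : Type*} [Fintype ι] {n : ℕ}

-- Every conjugate of an average of roots of unity is again such an average, hence has norm at most
-- one, so Kronecker's theorem applies.
theorem exists_pow_eq_one_of_isIntegral_sum_div_card {L : Type*} [Field L] [NumberField L]
    {ζ : ι → L} (hn : n ≠ 0) (hζ : ∀ i, ζ i ^ n = 1) (h₀ : (∑ i, ζ i) / Fintype.card ι ≠ 0)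
    (hint : IsIntegral ℤ ((∑ i, ζ i) / Fintype.card ι)) :
    ∃ m ≠ 0, ((∑ i, ζ i) / Fintype.card ι) ^ m = 1 := by
  obtain ⟨m, hm, h⟩ := NumberField.Embeddings.pow_eq_one_of_norm_le_one L ℂ h₀ hint fun φ ↦ by
    have hnorm (i) : ‖φ (ζ i)‖ = 1 :=
      Complex.norm_eq_one_of_pow_eq_one (by rw [← map_pow, hζ, map_one]) hn
    rw [map_div₀, map_sum, map_natCast, norm_div, Complex.norm_natCast]
    refine div_le_one_of_le₀ ((norm_sum_le _ _).trans_eq ?_) (Nat.cast_nonneg _)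
    simp [hnorm]
  exact ⟨m, hm.ne', h⟩

theorem norm_sum_div_card_eq_one_of_isIntegral {ζ : ι → ℂ} (hn : n ≠ 0) (hζ : ∀ i, ζ i ^ n = 1)
    (h₀ : (∑ i, ζ i) / Fintype.card ι ≠ 0) (hint : IsIntegral ℤ ((∑ i, ζ i) / Fintype.card ι)) :
    ‖(∑ i, ζ i) / Fintype.card ι‖ = 1 := by
  let L := IntermediateField.adjoin ℚ (Set.range ζ)
  have : FiniteDimensional ℚ L := by
    refine IntermediateField.finiteDimensional_adjoin (Set.forall_mem_range.2 fun i ↦ ?_)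
    exact .of_pow hn.bot_lt (hζ i ▸ isIntegral_one)
  have : NumberField L := ⟨⟩
  let φ : L →+* ℂ := algebraMap L ℂ
  let ξ (i : ι) : L := ⟨ζ i, IntermediateField.subset_adjoin ℚ _ (Set.mem_range_self i)⟩
  have havg : (∑ i, ζ i) / Fintype.card ι = φ ((∑ i, ξ i) / Fintype.card ι) := by
    rw [map_div₀, map_sum, map_natCast]
    rfl
  rw [havg] at h₀ hint ⊢
  obtain ⟨m, hm, h⟩ := exists_pow_eq_one_of_isIntegral_sum_div_card hn
    (fun i ↦ Subtype.ext (hζ i)) ((map_ne_zero φ).1 h₀)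
    ((isIntegral_algHom_iff φ.toIntAlgHom φ.injective).1 hint)
  exact Complex.norm_eq_one_of_pow_eq_one (by rw [← map_pow, h, map_one]) hm

theorem eq_of_isIntegral_sum_div_card {ζ : ι → ℂ} (hn : n ≠ 0) (hζ : ∀ i, ζ i ^ n = 1)
    (h₀ : (∑ i, ζ i) / Fintype.card ι ≠ 0) (hint : IsIntegral ℤ ((∑ i, ζ i) / Fintype.card ι))
    (i j : ι) : ζ i = ζ j := by
  have : Nonempty ι := ⟨i⟩
  by_contra hij
  refine (norm_sum_div_card_eq_one_of_isIntegral hn hζ h₀ hint).not_lt ?_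
  have hcard : (Fintype.card ι : ℝ)⁻¹ ≠ 0 := inv_ne_zero (NeZero.ne _)
  have h := norm_sum_lt_of_strictConvexSpace (t := Finset.univ) (z := ζ) (r := 1)
    (w := fun _ ↦ (Fintype.card ι : ℝ)⁻¹) (fun _ _ ↦ by positivity) (by simp)
    (Finset.mem_univ i) (Finset.mem_univ j) hij hcard hcard
    fun i _ ↦ (Complex.norm_eq_one_of_pow_eq_one (hζ i) hn).le
  rwa [← Finset.smul_sum, Complex.real_smul, Complex.ofReal_inv, Complex.ofReal_natCast, mul_comm,
    ← div_eq_mul_inv] at h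

end RootsOfUnity

section Eigenbasis
variable {k V : Type*} [Field k] [IsAlgClosed k] [CharZero k] [AddCommGroup V] [Module k V]
  [FiniteDimensional k V]

theorem exists_basis_apply_eq_smul_of_pow_eq_one {f : End k V} {n : ℕ} (hn : n ≠ 0)
    (hf : f ^ n = 1) : ∃ (b : Basis (Fin (finrank k V)) k V) (μ : Fin (finrank k V) → k),
      (∀ i, μ i ^ n = 1) ∧ ∀ i, f (b i) = μ i • b i := by
  have hss : f.IsSemisimple := by
    refine End.isSemisimple_of_squarefree_aeval_eq_zero (p := Polynomial.X ^ n - 1) ?_ ?_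
    · exact (Polynomial.X_pow_sub_one_separable_iff.2 (Nat.cast_ne_zero.2 hn)).squarefree
    · rw [map_sub, map_pow, Polynomial.aeval_X, map_one, hf, sub_self]
  have hspan : ⊤ ≤ Submodule.span k {v | ∃ μ : k, f v = μ • v} := by
    rw [← hss.iSup_eigenspace_eq_top]
    exact iSup_le fun μ v hv ↦ Submodule.subset_span ⟨μ, End.mem_eigenspace_iff.1 hv⟩
  let b := Basis.ofSpan hspan
  have := FiniteDimensional.fintypeBasisIndex b
  choose μ hμ using fun i ↦ Basis.ofSpan_subset hspan (Set.mem_range_self i)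
  let e := Fintype.equivFinOfCardEq (finrank_eq_card_basis b).symm
  refine ⟨b.reindex e, μ ∘ e.symm, fun i ↦ ?_, fun i ↦ ?_⟩
  · have h : f.HasEigenvector (μ (e.symm i)) (b (e.symm i)) :=
      End.hasEigenvector_iff.2 ⟨End.mem_eigenspace_iff.2 (hμ _), b.ne_zero _⟩
    have hpow := h.pow_apply n
    rw [hf, End.one_apply] at hpow
    exact smul_left_injective k (b.ne_zero _) (hpow.symm.trans (one_smul k _).symm)
  · rw [b.reindex_apply]
    exact hμ _

variable {G : Type*} [Group G] [Finite G] (ρ : Representation k G V)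

theorem exists_basis_character_eq_sum (g : G) :
    ∃ (b : Basis (Fin (finrank k V)) k V) (μ : Fin (finrank k V) → k),
      (∀ i, μ i ^ Nat.card G = 1) ∧ (∀ i, ρ g (b i) = μ i • b i) ∧ ρ.character g = ∑ i, μ i := by
  obtain ⟨b, μ, hμ, hb⟩ := exists_basis_apply_eq_smul_of_pow_eq_one (f := ρ g) Nat.card_pos.ne'
    (by rw [← map_pow, pow_card_eq_one', map_one])
  refine ⟨b, μ, hμ, hb, ?_⟩
  rw [Representation.character, LinearMap.trace_eq_matrix_trace k b]
  simp [Matrix.trace, LinearMap.toMatrix_apply, hb]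

theorem isIntegral_character (g : G) : IsIntegral ℤ (ρ.character g) := by
  obtain ⟨-, μ, hμ, -, h⟩ := exists_basis_character_eq_sum ρ g
  rw [h]
  exact IsIntegral.sum _ fun i _ ↦ .of_pow Nat.card_pos (hμ i ▸ isIntegral_one)

end Eigenbasis

section ClassSum
variable {G : Type*} [Group G] [Finite G]

/-- The class sum of `g`: the sum of the conjugates of `g` in the group algebra. -/
noncomputable def classSum (R : Type*) [Semiring R] (g : G) : MonoidAlgebra R G :=
  ∑ x ∈ (conjugatesOf g).toFinite.toFinset, MonoidAlgebra.of R G x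

theorem commute_classSum_of (R : Type*) [Semiring R] (g h : G) :
    Commute (classSum R g) (MonoidAlgebra.of R G h) := by
  simp only [Commute, SemiconjBy, classSum, Finset.sum_mul, Finset.mul_sum, ← map_mul]
  refine Finset.sum_equiv (MulAut.conj h⁻¹).toEquiv (fun x ↦ ?_) fun x _ ↦ ?_
  · have hx : IsConj x (MulAut.conj h⁻¹ x) := isConj_iff.2 ⟨h⁻¹, rfl⟩
    simp only [Set.Finite.mem_toFinset, conjugatesOf, Set.mem_ofPred_eq]
    exact ⟨fun hg ↦ hg.trans hx, fun hg ↦ hg.trans hx.symm⟩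
  · simp [mul_assoc]

variable {k V : Type*} [Field k] [AddCommGroup V] [Module k V] (ρ : Representation k G V)

theorem commute_lift_classSum (g h : G) :
    Commute (MonoidAlgebra.lift ℤ (End k V) G ρ (classSum ℤ g)) (ρ h) := by
  simpa using (commute_classSum_of ℤ g h).map (MonoidAlgebra.lift ℤ (End k V) G ρ)

theorem trace_lift_classSum (g : G) :
    LinearMap.trace k V (MonoidAlgebra.lift ℤ (End k V) G ρ (classSum ℤ g))
      = (conjugatesOf g).ncard * ρ.character g := by
  have h : ∀ x ∈ (conjugatesOf g).toFinite.toFinset, LinearMap.trace k V (ρ x) = ρ.character g := by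
    intro x hx
    rw [Set.Finite.mem_toFinset] at hx
    obtain ⟨y, rfl⟩ := isConj_iff.1 hx.out
    exact ρ.char_conj g y
  simp only [classSum, map_sum, MonoidAlgebra.lift_of]
  rw [Finset.sum_congr rfl h, Finset.sum_const, nsmul_eq_mul, Set.ncard_eq_toFinset_card _]

theorem exists_isIntegral_lift_classSum_eq_smul_one [IsAlgClosed k] [FiniteDimensional k V]
    [ρ.IsIrreducible] (g : G) : ∃ ω : k, IsIntegral ℤ ω ∧
      MonoidAlgebra.lift ℤ (End k V) G ρ (classSum ℤ g) = ω • 1 := by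
  obtain ⟨ω, hω⟩ := (IsIrreducible.algebraMap_intertwiningMap_bijective_of_isAlgClosed
    (ρ := ρ)).2 ⟨_, commute_lift_classSum ρ g⟩
  have hω : MonoidAlgebra.lift ℤ (End k V) G ρ (classSum ℤ g) = algebraMap k (End k V) ω :=
    congrArg IntertwiningMap.toLinearMap hω.symm
  have : Nontrivial V := nontrivial_of_isIrreducible ρ
  have hint := (IsIntegral.of_finite ℤ (classSum ℤ g)).map (MonoidAlgebra.lift ℤ (End k V) G ρ)
  rw [hω, isIntegral_algebraMap_iff (FaithfulSMul.algebraMap_injective k (End k V))] at hint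
  exact ⟨ω, hint, hω.trans (Algebra.algebraMap_eq_smul_one ω)⟩

theorem isIntegral_ncard_conjugatesOf_mul_character_div_finrank [IsAlgClosed k]
    [FiniteDimensional k V] [ρ.IsIrreducible] (g : G) :
    IsIntegral ℤ ((conjugatesOf g).ncard * ρ.character g / finrank k V) := by
  obtain ⟨ω, hω, h⟩ := exists_isIntegral_lift_classSum_eq_smul_one ρ g
  rw [← trace_lift_classSum, h, map_smul, LinearMap.trace_one, smul_eq_mul]
  obtain h₀ | h₀ := eq_or_ne (finrank k V : k) 0
  · simp [h₀, isIntegral_zero]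
  · rwa [mul_div_cancel_right₀ _ h₀]

end ClassSum

section Complex
variable {G V : Type*} [Group G] [Finite G] [AddCommGroup V] [Module ℂ V] [FiniteDimensional ℂ V]
  (ρ : Representation ℂ G V) [ρ.IsIrreducible] {g : G}

theorem isIntegral_character_div_finrank
    (hg : (conjugatesOf g).ncard.Coprime (finrank ℂ V)) :
    IsIntegral ℤ (ρ.character g / finrank ℂ V) := by
  have := nontrivial_of_isIrreducible ρ
  have hV : (finrank ℂ V : ℂ) ≠ 0 := Nat.cast_ne_zero.2 finrank_pos.ne'
  obtain ⟨a, b, hab⟩ : ∃ a b : ℤ, a * (conjugatesOf g).ncard + b * finrank ℂ V = 1 :=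
    Nat.isCoprime_iff_coprime.2 hg
  have hab : (a * (conjugatesOf g).ncard + b * finrank ℂ V : ℂ) = 1 := mod_cast hab
  have h : ρ.character g / finrank ℂ V
      = a * ((conjugatesOf g).ncard * ρ.character g / finrank ℂ V) + b * ρ.character g := by
    field_simp
    linear_combination -ρ.character g * hab
  rw [h]
  have hclass := isIntegral_ncard_conjugatesOf_mul_character_div_finrank ρ g
  exact (isIntegral_algebraMap.mul hclass).add
    (isIntegral_algebraMap.mul (isIntegral_character ρ g))

theorem character_eq_zero_or_exists_apply_eq_smul
    (hg : (conjugatesOf g).ncard.Coprime (finrank ℂ V)) :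
    ρ.character g = 0 ∨ ∃ c : ℂ, ∀ v, ρ g v = c • v := by
  have := nontrivial_of_isIrreducible ρ
  obtain ⟨b, μ, hμ, hb, hχ⟩ := exists_basis_character_eq_sum ρ g
  have hint := isIntegral_character_div_finrank ρ hg
  refine or_iff_not_imp_left.2 fun h₀ ↦ ⟨μ ⟨0, finrank_pos⟩, fun v ↦ ?_⟩
  have hquot := div_ne_zero h₀ (Nat.cast_ne_zero (R := ℂ).2 (finrank_pos (R := ℂ) (M := V)).ne')
  rw [← Fintype.card_fin (finrank ℂ V), hχ] at hint hquot
  have hconst := eq_of_isIntegral_sum_div_card Nat.card_pos.ne' hμ hquot hint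
  have hscalar : ρ g = μ ⟨0, finrank_pos⟩ • LinearMap.id :=
    b.ext fun i ↦ by rw [hb, hconst i ⟨0, finrank_pos⟩, LinearMap.smul_apply, LinearMap.id_apply]
  rw [hscalar, LinearMap.smul_apply, LinearMap.id_apply]

end Complex

theorem mem_center_of_apply_eq_smul {k G V : Type*} [Field k] [Group G] [AddCommGroup V]
    [Module k V] {ρ : Representation k G V} (hρ : Function.Injective ρ) {z : G} {c : k}
    (hz : ∀ v, ρ z v = c • v) : z ∈ Subgroup.center G :=
  Subgroup.mem_center_iff.2 fun g ↦ hρ <| LinearMap.ext fun v ↦ by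
    rw [map_mul, map_mul, Module.End.mul_apply, Module.End.mul_apply, hz, hz, map_smul]

section SimpleGroup
variable {G : Type*} [Group G] [IsSimpleGroup G]

theorem center_eq_bot_of_not_isSolvable (hG : ¬ Group.IsSolvable G) : Subgroup.center G = ⊥ := by
  refine (Subgroup.Normal.eq_bot_or_eq_top inferInstance).resolve_right fun h ↦ hG ?_
  refine IsSimpleGroup.comm_iff_isSolvable.1 fun a b ↦ ?_
  exact Subgroup.mem_center_iff.1 (h ▸ Subgroup.mem_top b) a

theorem eq_one_of_apply_eq_smul {k V : Type*} [Field k] [AddCommGroup V] [Module k V]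
    (hG : ¬ Group.IsSolvable G) (ρ : Representation k G V) {z : G} (hz : z ≠ 1) {c : k}
    (h : ∀ v, ρ z v = c • v) : ρ = 1 := by
  obtain hker | hker := (MonoidHom.normal_ker ρ).eq_bot_or_eq_top
  · have hmem := mem_center_of_apply_eq_smul ((MonoidHom.ker_eq_bot_iff ρ).1 hker) h
    rw [center_eq_bot_of_not_isSolvable hG, Subgroup.mem_bot] at hmem
    exact absurd hmem hz
  · exact MonoidHom.ker_eq_top_iff.1 hker

end SimpleGroup

theorem one_add_natCast_mul_ne_zero_of_isIntegral {K : Type*} [Field K] [CharZero K] {q : ℕ}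
    (hq : q ≠ 1) {β : K} (hβ : IsIntegral ℤ β) : 1 + q * β ≠ 0 := by
  intro h
  have hmul : -β * q = 1 := by linear_combination -h
  have hβq : -β = algebraMap ℚ K (q : ℚ)⁻¹ := by
    rw [map_inv₀, map_natCast, eq_inv_of_mul_eq_one_left hmul]
  rw [← IsIntegral.neg_iff, hβq, isIntegral_algebraMap_iff (algebraMap ℚ K).injective] at hβ
  obtain ⟨m, hm⟩ := IsIntegrallyClosed.isIntegral_iff.1 hβ
  rw [hβq, ← hm, algebraMap_int_eq, eq_intCast, map_intCast] at hmul
  have hunit : m * (q : ℤ) = 1 := mod_cast hmul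
  exact hq (Nat.isUnit_iff.1 (Int.ofNat_isUnit.1 (.of_mul_eq_one_right m hunit)))

section PrimePowerClass
variable {G : Type} [Group G] [Finite G] {χ : G → ℂ}

theorem isIrrChar_one : IsIrrChar G 1 := by
  have := Fintype.ofFinite G
  have h : (FDRep.of (Representation.trivial ℂ G ℂ)).character = 1 := by
    ext g
    simp [FDRep.character]
  refine ⟨FDRep.of (Representation.trivial ℂ G ℂ),
    (FDRep.simple_iff_char_is_norm_one _).2 ?_, h.symm⟩
  simp [h]

theorem IsIrrChar.eq_one_of_forall_apply_eq (hχ : IsIrrChar G χ) (h : ∀ g, χ g = χ 1) : χ = 1 := by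
  classical
  have := Fintype.ofFinite G
  have hsum := hχ.sum_mul_apply_inv isIrrChar_one
  by_contra hne
  simp [h _, hne, hχ.apply_one_ne_zero] at hsum

theorem IsIrrChar.exists_isIntegral_apply_one_mul_apply_eq [IsSimpleGroup G]
    (hG : ¬ Group.IsSolvable G) (hχ : IsIrrChar G χ) (hχ₁ : χ ≠ 1) {z : G} (hz : z ≠ 1) {q n : ℕ}
    (hq : q.Prime) (hn : (conjugatesOf z).ncard = q ^ n) :
    ∃ β : ℂ, IsIntegral ℤ β ∧ χ 1 * χ z = q * β := by
  obtain ⟨U, hU, rfl⟩ := hχ.exists_isIrreducible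
  obtain ⟨m, hm⟩ | hq' := em (q ∣ finrank ℂ U.toSubmodule)
  · refine ⟨m * U.toRepresentation.character z,
      (isIntegral_algebraMap (R := ℤ) (x := m)).mul (isIntegral_character _ _), ?_⟩
    rw [char_one, hm, Nat.cast_mul, mul_assoc]
  have hcop : (conjugatesOf z).ncard.Coprime (finrank ℂ U.toSubmodule) :=
    hn ▸ ((Nat.Prime.coprime_iff_not_dvd hq).2 hq').pow_left n
  obtain h | ⟨c, hc⟩ := character_eq_zero_or_exists_apply_eq_smul U.toRepresentation hcop
  · exact ⟨0, isIntegral_zero, by rw [h, mul_zero, mul_zero]⟩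
  · have hone := eq_one_of_apply_eq_smul hG _ hz hc
    exact absurd (hχ.eq_one_of_forall_apply_eq fun g ↦ by rw [hone]; rfl) hχ₁

-- If `G` were not solvable, every nontrivial term of the column orthogonality relation
-- `∑ χ, χ 1 * χ z = 0` would be divisible by `q`, whereas the trivial character contributes `1`.
theorem isSolvable_of_ncard_conjugatesOf_eq_prime_pow [IsSimpleGroup G] {z : G} (hz : z ≠ 1)
    {q n : ℕ} (hq : q.Prime) (hn : (conjugatesOf z).ncard = q ^ n) : Group.IsSolvable G := by
  classical
  by_contra hG
  have hone : (1 : G → ℂ) ∈ (finite_setOf_isIrrChar G).toFinset :=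
    (Set.Finite.mem_toFinset _).2 isIrrChar_one
  have hirr {χ : G → ℂ} (hχ : χ ∈ (finite_setOf_isIrrChar G).toFinset.erase 1) :
      ∃ β : ℂ, IsIntegral ℤ β ∧ χ 1 * χ z = q * β := by
    rw [Finset.mem_erase, Set.Finite.mem_toFinset] at hχ
    exact hχ.2.out.exists_isIntegral_apply_one_mul_apply_eq hG hχ.1 hz hq hn
  choose! β hβ hmul using @hirr
  have hsum := sum_isIrrChar_apply_one_mul_apply_eq_zero hz
  rw [← Finset.add_sum_erase _ _ hone, Finset.sum_congr rfl fun χ hχ ↦ hmul hχ, ← Finset.mul_sum,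
    Pi.one_apply, Pi.one_apply, one_mul] at hsum
  exact one_add_natCast_mul_ne_zero_of_isIntegral hq.ne_one
    (IsIntegral.sum _ fun χ hχ ↦ hβ hχ) hsum

end PrimePowerClass

section ConjugacyClass
variable {G : Type*} [Group G]

theorem ncard_conjugatesOf (g : G) :
    (conjugatesOf g).ncard = (Subgroup.centralizer {g}).index := by
  have horbit : conjugatesOf g = MulAction.orbit (ConjAct G) g := by
    ext x
    rw [ConjAct.mem_orbit_conjAct, isConj_comm]
    rfl
  rw [horbit, ← MulAction.index_stabilizer, ConjAct.stabilizer_eq_centralizer]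
  rfl

theorem ncard_conjugatesOf_dvd_card (g : G) : (conjugatesOf g).ncard ∣ Nat.card G :=
  ncard_conjugatesOf g ▸ Subgroup.index_dvd_card _

theorem exists_ne_one_not_dvd_ncard_conjugatesOf [Finite G] {p : ℕ} [Fact p.Prime]
    (hp : p ∣ Nat.card G) : ∃ z : G, z ≠ 1 ∧ ¬ p ∣ (conjugatesOf z).ncard := by
  obtain ⟨P⟩ : Nonempty (Sylow p G) := inferInstance
  have : Nontrivial P := (Subgroup.nontrivial_iff_ne_bot _).2 (P.ne_bot_of_dvd_card hp)
  have := P.isPGroup'.center_nontrivial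
  obtain ⟨⟨z, hzP⟩, hz⟩ := exists_ne (1 : Subgroup.center P)
  have hle : (P : Subgroup G) ≤ Subgroup.centralizer {(z : G)} := fun x hx ↦
    Subgroup.mem_centralizer_singleton_iff.2
      (congrArg Subtype.val (Subgroup.mem_center_iff.1 hzP ⟨x, hx⟩))
  refine ⟨z, fun h ↦ hz (Subtype.ext (Subtype.ext h)), fun hdvd ↦ P.not_dvd_index ?_⟩
  exact (ncard_conjugatesOf (z : G) ▸ hdvd).trans (Subgroup.index_dvd_of_le hle)

end ConjugacyClass

theorem isSolvable_of_isSimpleGroup_of_primeFactors_card_subset {G : Type} [Group G] [Finite G]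
    [IsSimpleGroup G] {p q : ℕ} (hp : p.Prime) (hq : q.Prime) (hpG : p ∣ Nat.card G)
    (hG : (Nat.card G).primeFactors ⊆ {p, q}) : Group.IsSolvable G := by
  have := Fact.mk hp
  obtain ⟨z, hz, hpz⟩ := exists_ne_one_not_dvd_ncard_conjugatesOf hpG
  have hpos : (conjugatesOf z).ncard ≠ 0 := ne_zero_of_dvd_ne_zero Nat.card_pos.ne'
    (ncard_conjugatesOf_dvd_card z)
  refine isSolvable_of_ncard_conjugatesOf_eq_prime_pow hz hq
    (Nat.eq_prime_pow_of_unique_prime_dvd hpos fun {r} hr hrz ↦ ?_)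
  have hmem := hG (Nat.mem_primeFactors.2
    ⟨hr, hrz.trans (ncard_conjugatesOf_dvd_card z), Nat.card_pos.ne'⟩)
  rw [Finset.mem_insert, Finset.mem_singleton] at hmem
  exact hmem.resolve_left fun h ↦ hpz (h ▸ hrz)

theorem exists_normal_ne_bot_ne_top_of_not_isSimpleGroup {G : Type*} [Group G] [Nontrivial G]
    (hG : ¬ IsSimpleGroup G) : ∃ H : Subgroup G, H.Normal ∧ H ≠ ⊥ ∧ H ≠ ⊤ := by
  by_contra! h
  exact hG ⟨fun H hH ↦ or_iff_not_imp_left.2 (h H hH)⟩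

theorem card_subgroup_lt_of_ne_top {G : Type*} [Group G] [Finite G] {H : Subgroup G} (hH : H ≠ ⊤) :
    Nat.card H < Nat.card G :=
  H.card_le_card_group.lt_of_ne fun h ↦ hH (H.eq_top_of_card_eq h)

theorem index_lt_card_group_of_ne_bot {G : Type*} [Group G] [Finite G] {H : Subgroup G}
    (hH : H ≠ ⊥) : H.index < Nat.card G := by
  rw [← H.index_mul_card]
  exact lt_mul_of_one_lt_right H.index_ne_zero_of_finite.bot_lt (H.one_lt_card_iff_ne_bot.2 hH)

theorem isSolvable_of_primeFactors_card_subset {G : Type} [Group G] [Finite G] {p q : ℕ}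
    (hp : p.Prime) (hq : q.Prime) (hG : (Nat.card G).primeFactors ⊆ {p, q}) :
    Group.IsSolvable G := by
  induction hn : Nat.card G using Nat.strong_induction_on generalizing G with
  | _ n ih =>
  subst hn
  cases subsingleton_or_nontrivial G
  · infer_instance
  by_cases hsimple : IsSimpleGroup G
  · obtain ⟨r, hr⟩ := Nat.nonempty_primeFactors.2 (Finite.one_lt_card (α := G))
    have hrG := Nat.dvd_of_mem_primeFactors hr
    obtain rfl | rfl : r = p ∨ r = q := by simpa using hG hr
    · exact isSolvable_of_isSimpleGroup_of_primeFactors_card_subset hp hq hrG hG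
    · exact isSolvable_of_isSimpleGroup_of_primeFactors_card_subset hq hp hrG
        (Finset.pair_comm p r ▸ hG)
  · obtain ⟨H, hH, hbot, htop⟩ := exists_normal_ne_bot_ne_top_of_not_isSimpleGroup hsimple
    have hcardH := (Nat.primeFactors_mono H.card_subgroup_dvd_card Nat.card_pos.ne').trans hG
    have hcardQ := (Nat.primeFactors_mono H.card_quotient_dvd_card Nat.card_pos.ne').trans hG
    rw [Group.isSolvable_iff_subgroup_quotient H]
    exact ⟨ih _ (card_subgroup_lt_of_ne_top htop) hcardH rfl,
      ih _ (index_lt_card_group_of_ne_bot hbot) hcardQ rfl⟩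

theorem isSolvable_of_forall_sylow_normal {G : Type} [Group G] [Finite G]
    (hG : ∀ (p : ℕ) [Fact p.Prime], 3 < p → ∀ P : Sylow p G, (P : Subgroup G).Normal) :
    Group.IsSolvable G := by
  induction hn : Nat.card G using Nat.strong_induction_on generalizing G with
  | _ n ih =>
  subst hn
  by_cases hcard : (Nat.card G).primeFactors ⊆ {2, 3}
  · exact isSolvable_of_primeFactors_card_subset Nat.prime_two Nat.prime_three hcard
  obtain ⟨p, hpG, hp⟩ := Finset.not_subset.1 hcard
  have hprime := Nat.prime_of_mem_primeFactors hpG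
  have hdvd := Nat.dvd_of_mem_primeFactors hpG
  have := Fact.mk hprime
  have hp₃ : 3 < p := by
    have := hprime.two_le
    rw [Finset.mem_insert, Finset.mem_singleton] at hp
    omega
  obtain ⟨P⟩ : Nonempty (Sylow p G) := inferInstance
  have := hG p hp₃ P
  have := P.isPGroup'.isNilpotent
  rw [Group.isSolvable_iff_subgroup_quotient (P : Subgroup G)]
  have hlt := index_lt_card_group_of_ne_bot (P.ne_bot_of_dvd_card hdvd)
  refine ⟨inferInstance, ih _ hlt (fun q _ hq Q ↦ ?_) rfl⟩
  have hsurj := QuotientGroup.mk'_surjective (P : Subgroup G)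
  obtain ⟨R, rfl⟩ := Sylow.mapSurjective_surjective hsurj q Q
  rw [Sylow.coe_mapSurjective]
  exact (hG q hq R).map _ hsurj

theorem degree_sum_gt_two_ge_five_mul_index_commutator
    (G : Type) [Group G] [Finite G] (hG : ¬ IsSolvable G) :
    5 * ((commutator G).index : ℝ) ≤ charDegreeSumGtTwo G := by
  by_contra hsum
  have hcomm : Group.IsSolvable (commutator G) :=
    isSolvable_of_forall_sylow_normal fun p _ hp P ↦ by
      by_contra hP
      have hp₅ : 5 ≤ p := Nat.Prime.five_le_of_ne_two_of_ne_three Fact.out (by omega) (by omega)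
      have hbound := prime_mul_index_commutator_le_of_not_normal_sylow (by omega) P hP
      exact hsum (hbound.trans' (by gcongr; exact_mod_cast hp₅))
  have hquot : Group.IsSolvable (G ⧸ commutator G) :=
    inferInstanceAs (Group.IsSolvable (Abelianization G))
  exact hG ((Group.isSolvable_iff_subgroup_quotient (commutator G)).2 ⟨hcomm, hquot⟩)
end

section
/- Let G be a finite group, N a normal subgroup of G, and suppose χ ∈ Irr(G) is such that the restriction of χ to N is a nontrivial irreducible character of N. Then T(G, N) ≥ χ(1)·T(G/N), where T(G, N) is the sum of the degrees of the irreducible characters of G whose kernel does not contain N, and T(G/N) is the sum of the degrees of the irreducible characters of G/N. -/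
/-- `T(G, N)`: the sum of the degrees of the complex irreducible characters of `G` whose
kernel does not contain `N` (`χ` has `g` in its kernel iff `χ g = χ 1`). -/
noncomputable def relCharDegreeSum (G : Type) [Group G] (N : Subgroup G) : ℝ :=
  ∑ᶠ χ ∈ {χ : G → ℂ | IsIrrChar G χ ∧ ∃ n ∈ N, χ n ≠ χ 1}, (χ 1).re

/-!
If `V` affords `χ` and `V|_N` is irreducible, then by Schur's lemma the `N`-invariants of `End V`
are the scalars, which all of `G` fixes. Hence the sum of `|χ|²` over any coset `gN` is the same as
over `N`, namely `|N|`. Summing over the cosets, `β ↦ β * χ` preserves inner products from class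
functions on `G ⧸ N` to those on `G`, so it carries the irreducible characters of `G ⧸ N`
injectively to irreducible characters of `G` (Gallagher). Their kernels do not contain `N`, and
their degrees sum to `χ(1) T(G ⧸ N)`.
-/

open CategoryTheory MonoidalCategory Representation
open scoped ComplexOrder

section FiniteSums

theorem finsum_mem_le_finsum_mem_of_subset {ι M : Type*} [AddCommMonoid M] [PartialOrder M]
    [IsOrderedAddMonoid M] {s t : Set ι} {f : ι → M} (ht : t.Finite) (hst : s ⊆ t)
    (hf : ∀ i ∈ t, 0 ≤ f i) : ∑ᶠ i ∈ s, f i ≤ ∑ᶠ i ∈ t, f i := by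
  rw [finsum_mem_eq_finite_toFinset_sum f (ht.subset hst), finsum_mem_eq_finite_toFinset_sum f ht]
  exact Finset.sum_le_sum_of_subset_of_nonneg (Set.Finite.toFinset_mono hst)
    fun i hi _ ↦ hf i (ht.mem_toFinset.mp hi)

theorem sum_eq_sum_quotient_sum_coset {G M : Type*} [Group G] [Fintype G] [AddCommMonoid M]
    (N : Subgroup G) [Fintype N] [Fintype (G ⧸ N)] (f : G → M) :
    ∑ g, f g = ∑ q : G ⧸ N, ∑ n : N, f (q.out * n) := by
  let e : G ≃ (G ⧸ N) × N :=
    { toFun g := ⟨g, (g : G ⧸ N).out⁻¹ * g, QuotientGroup.eq.mp (QuotientGroup.out_eq' _)⟩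
      invFun p := p.1.out * p.2
      left_inv g := by simp
      right_inv p := by ext <;> simp }
  rw [← Fintype.sum_prod_type']
  exact Fintype.sum_equiv e _ _ fun g ↦ congrArg f (e.symm_apply_apply g).symm

end FiniteSums

section CharForm

variable {k G : Type*} [Field k] [Group G] [Fintype G]

variable (k G) in
/-- The standard inner product `[φ, ψ] = |G|⁻¹ ∑ φ(g) ψ(g⁻¹)` on functions on a finite group.
It is encoded as a bilinear form over any field: on complex characters `ψ(g⁻¹)` is the conjugate
of `ψ(g)`. -/
noncomputable def charForm : LinearMap.BilinForm k (G → k) :=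
  LinearMap.mk₂ k (fun φ ψ ↦ (Nat.card G : k)⁻¹ * ∑ g, φ g * ψ g⁻¹)
    (by simp [add_mul, mul_add, Finset.sum_add_distrib])
    (by simp [mul_assoc, Finset.mul_sum, mul_left_comm])
    (by simp [mul_add, Finset.sum_add_distrib])
    (by simp [Finset.mul_sum, mul_left_comm])

theorem charForm_apply (φ ψ : G → k) :
    charForm k G φ ψ = (Nat.card G : k)⁻¹ * ∑ g, φ g * ψ g⁻¹ :=
  rfl

theorem charForm_const [CharZero k] (a b : k) :
    charForm k G (fun _ ↦ a) (fun _ ↦ b) = a * b := by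
  simp [charForm_apply, Nat.card_eq_fintype_card]

/-- The product of `χ` with the inflation to `G` of a function `β` on `G ⧸ N`. When `χ`
restricts irreducibly to `N`, these products are the characters in Gallagher's theorem. -/
def inflationMul {N : Subgroup G} (χ : G → k) (β : G ⧸ N → k) : G → k :=
  fun g ↦ β g * χ g

theorem charForm_inflationMul {N : Subgroup G} [N.Normal] [Fintype N] [Fintype (G ⧸ N)]
    {χ : G → k} (hN : (Nat.card N : k) ≠ 0)
    (hχ : ∀ g, ∑ n : N, χ (g * n) * χ (g * n)⁻¹ = Nat.card N) (α β : G ⧸ N → k) :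
    charForm k G (inflationMul χ α) (inflationMul χ β) = charForm k (G ⧸ N) α β := by
  have sum_coset (q : G ⧸ N) :
      ∑ n : N, inflationMul χ α (q.out * n) * inflationMul χ β (q.out * n)⁻¹ =
        Nat.card N * (α q * β q⁻¹) := by
    have mk_mul (n : N) : ((q.out * n : G) : G ⧸ N) = q := by simp
    simp only [inflationMul, QuotientGroup.mk_inv, mk_mul, mul_mul_mul_comm, ← Finset.mul_sum, hχ]
    ring
  simp only [charForm_apply, sum_eq_sum_quotient_sum_coset N, sum_coset, ← Finset.mul_sum]
  rw [N.card_eq_card_quotient_mul_card_subgroup]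
  push_cast
  field_simp

end CharForm

section Representations

universe u v

theorem sum_trace_coset {k G V : Type*} [CommRing k] [Group G] [AddCommGroup V] [Module k V]
    {ρ : Representation k G V} {N : Subgroup G} [Fintype N] {g : G}
    (hg : ∀ v ∈ invariants (ρ.comp N.subtype), ρ g v = v) :
    ∑ n : N, LinearMap.trace k V (ρ (g * n)) = ∑ n : N, LinearMap.trace k V (ρ n) := by
  have sum_mem (v : V) : (∑ n : N, ρ n) v ∈ invariants (ρ.comp N.subtype) := fun m ↦ by
    simp only [LinearMap.sum_apply, map_sum]
    exact Fintype.sum_equiv (Equiv.mulLeft m) _ _ fun n ↦ by simp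
  have mul_sum : ρ g * ∑ n : N, ρ n = ∑ n : N, ρ n :=
    LinearMap.ext fun v ↦ hg _ (sum_mem v)
  simp only [map_mul, ← map_sum, ← Finset.mul_sum, mul_sum]

variable {k : Type u} [Field k]

theorem nontrivial_of_simple {G : Type v} [Monoid G] (V : FDRep k G) [Simple V] : Nontrivial V := by
  by_contra h
  rw [not_nontrivial_iff_subsingleton] at h
  refine id_nonzero V ?_
  ext v
  exact Subsingleton.elim (α := V) _ _

variable [IsAlgClosed k]

theorem exists_eq_smul_one_of_mem_invariants {G : Type v} [Group G] (V : FDRep k G) [Simple V]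
    {f : V →ₗ[k] V} (hf : f ∈ (linHom V.ρ V.ρ).invariants) : ∃ c : k, f = c • 1 := by
  let φ : V ⟶ V := ⟨FGModuleCat.ofHom f, fun g ↦ by
    ext v
    exact ((mem_linHom_invariants_iff_isIntertwining f).mp hf).isIntertwining g v⟩
  obtain ⟨c, hc⟩ := endomorphism_simple_eq_smul_id k φ
  exact ⟨c, congrArg (fun ψ : V ⟶ V ↦ ψ.hom.hom.hom) hc.symm⟩

theorem linHom_apply_eq_of_simple_res {G : Type v} [Group G] (V : FDRep k G) (N : Subgroup G)
    [Simple ((Action.res _ N.subtype).obj V : FDRep k N)] {f : V →ₗ[k] V}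
    (hf : f ∈ invariants ((linHom V.ρ V.ρ).comp N.subtype)) (g : G) :
    linHom V.ρ V.ρ g f = f := by
  obtain ⟨c, rfl⟩ : ∃ c : k, f = c • 1 :=
    exists_eq_smul_one_of_mem_invariants ((Action.res _ N.subtype).obj V : FDRep k N) hf
  rw [map_smul]
  congr 1
  ext v
  simp [linHom_apply]

variable {G : Type u} [Group G] [CharZero k]

theorem sum_coset_character_mul_inv (V : FDRep k G) (N : Subgroup G) [Fintype N]
    [Simple ((Action.res _ N.subtype).obj V : FDRep k N)] (g : G) :
    ∑ n : N, V.character (g * n) * V.character (g * n)⁻¹ = Nat.card N := by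
  have char_mul_inv (x : G) : V.character x * V.character x⁻¹ =
      LinearMap.trace k (V →ₗ[k] V) (linHom V.ρ V.ρ x) := by
    rw [mul_comm]
    exact (FDRep.char_linHom V V x).symm
  calc ∑ n : N, V.character (g * n) * V.character (g * n)⁻¹
      = ∑ n : N, V.character n * V.character (n : G)⁻¹ := by
        simp only [char_mul_inv]
        exact sum_trace_coset fun f hf ↦ linHom_apply_eq_of_simple_res V N hf g
    _ = Nat.card N := (FDRep.simple_iff_char_is_norm_one
        ((Action.res _ N.subtype).obj V : FDRep k N)).mp inferInstance

theorem simple_iff_charForm_self [Fintype G] (V : FDRep k G) :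
    Simple V ↔ charForm k G V.character V.character = 1 := by
  rw [FDRep.simple_iff_char_is_norm_one, charForm_apply, inv_mul_eq_one₀ (NeZero.ne _), eq_comm]

theorem charForm_eq_zero_of_not_iso [Fintype G] {V W : FDRep k G} [Simple V] [Simple W]
    (h : IsEmpty (V ≅ W)) : charForm k G V.character W.character = 0 := by
  classical
  have := invertibleOfNonzero (NeZero.ne (Nat.card G : k))
  rw [charForm_apply, FDRep.char_orthonormal, if_neg (not_nonempty_iff.mpr h)]

end Representations

namespace IsIrrChar

section Degree

variable {G : Type} [Group G] {χ : G → ℂ}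

theorem one_pos (hχ : IsIrrChar G χ) : 0 < χ 1 := by
  obtain ⟨V, hV, rfl⟩ := hχ
  have := nontrivial_of_simple V
  rw [FDRep.char_one]
  exact_mod_cast Module.finrank_pos

theorem re_one_pos (hχ : IsIrrChar G χ) : 0 < (χ 1).re :=
  (Complex.pos_iff.mp hχ.one_pos).1

theorem im_one (hχ : IsIrrChar G χ) : (χ 1).im = 0 :=
  (Complex.pos_iff.mp hχ.one_pos).2.symm

theorem re_inflationMul_one {N : Subgroup G} [N.Normal] (hχ : IsIrrChar G χ) (β : G ⧸ N → ℂ) :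
    (inflationMul χ β 1).re = (χ 1).re * (β 1).re := by
  simp [inflationMul, hχ.im_one, mul_comm]

theorem exists_mem_inflationMul_ne {N : Subgroup G} [N.Normal] {β : G ⧸ N → ℂ}
    (hβ : IsIrrChar (G ⧸ N) β) (hχ : ∃ n ∈ N, χ n ≠ χ 1) :
    ∃ n ∈ N, inflationMul χ β n ≠ inflationMul χ β 1 := by
  obtain ⟨n, hn, hne⟩ := hχ
  refine ⟨n, hn, fun h ↦ hne (mul_left_cancel₀ hβ.one_pos.ne' ?_)⟩
  simpa [inflationMul, (QuotientGroup.eq_one_iff n).mpr hn] using h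

end Degree

section Orthogonality

variable {G : Type} [Group G] {χ ψ : G → ℂ}

theorem charForm_self [Fintype G] (hχ : IsIrrChar G χ) : charForm ℂ G χ χ = 1 := by
  obtain ⟨V, hV, rfl⟩ := hχ
  exact (simple_iff_charForm_self V).mp hV

theorem charForm_of_ne [Fintype G] (hχ : IsIrrChar G χ) (hψ : IsIrrChar G ψ) (hne : χ ≠ ψ) :
    charForm ℂ G χ ψ = 0 := by
  obtain ⟨V, hV, rfl⟩ := hχ
  obtain ⟨W, hW, rfl⟩ := hψ
  exact charForm_eq_zero_of_not_iso ⟨fun i ↦ hne (FDRep.char_iso i)⟩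

theorem simple [Finite G] {V : FDRep ℂ G} (hV : IsIrrChar G V.character) : Simple V := by
  have := Fintype.ofFinite G
  exact (simple_iff_charForm_self V).mpr hV.charForm_self

theorem eq_one_of_forall_eq [Finite G] (hχ : IsIrrChar G χ) (h : ∀ g, χ g = χ 1) :
    χ = fun _ ↦ 1 := by
  have := Fintype.ofFinite G
  have hconst : χ = fun _ ↦ χ 1 := funext h
  have hsq : χ 1 * χ 1 = 1 := by
    rw [← charForm_const (G := G), ← hconst, hχ.charForm_self]
  have hone : χ 1 = 1 := (mul_self_eq_one_iff.mp hsq).resolve_right fun hneg ↦ by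
    have := hχ.re_one_pos
    norm_num [hneg] at this
  rw [hconst, hone]

theorem finite_setOf (G : Type) [Group G] [Finite G] : {χ : G → ℂ | IsIrrChar G χ}.Finite := by
  have := Fintype.ofFinite G
  have hli : LinearIndependent ℂ ((↑) : {χ : G → ℂ | IsIrrChar G χ} → G → ℂ) :=
    LinearMap.BilinForm.linearIndependent_of_iIsOrtho (B := charForm ℂ G)
      (fun χ ψ hne ↦ χ.2.charForm_of_ne ψ.2 (Subtype.coe_injective.ne hne))
      (fun χ ↦ χ.2.charForm_self.trans_ne one_ne_zero)
  exact hli.setFinite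

end Orthogonality

section IrreducibleRestriction

variable {G : Type} [Group G] {N : Subgroup G} {χ : G → ℂ}

theorem exists_mem_ne_one [Finite N] (hres : IsIrrChar N (fun n : N ↦ χ n))
    (hnontriv : (fun n : N ↦ χ n) ≠ fun _ ↦ 1) : ∃ n ∈ N, χ n ≠ χ 1 := by
  by_contra! h
  exact hnontriv (hres.eq_one_of_forall_eq fun n ↦ h n n.2)

theorem sum_coset_mul_inv [Fintype N] (hχ : IsIrrChar G χ)
    (hres : IsIrrChar N (fun n : N ↦ χ n)) (g : G) :
    ∑ n : N, χ (g * n) * χ (g * n)⁻¹ = Nat.card N := by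
  obtain ⟨V, -, rfl⟩ := hχ
  have : Simple ((Action.res _ N.subtype).obj V : FDRep ℂ N) := hres.simple
  exact sum_coset_character_mul_inv V N g

variable [N.Normal]

protected theorem charForm_inflationMul [Fintype G] [Fintype (G ⧸ N)] (hχ : IsIrrChar G χ)
    (hres : IsIrrChar N (fun n : N ↦ χ n)) (α β : G ⧸ N → ℂ) :
    charForm ℂ G (inflationMul χ α) (inflationMul χ β) = charForm ℂ (G ⧸ N) α β := by
  have := Fintype.ofFinite N
  exact charForm_inflationMul (NeZero.ne _) (hχ.sum_coset_mul_inv hres) α β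

variable [Finite G]

protected theorem inflationMul (hχ : IsIrrChar G χ) (hres : IsIrrChar N (fun n : N ↦ χ n))
    {β : G ⧸ N → ℂ} (hβ : IsIrrChar (G ⧸ N) β) : IsIrrChar G (inflationMul χ β) := by
  have := Fintype.ofFinite G
  have := Fintype.ofFinite (G ⧸ N)
  have hnorm := hχ.charForm_inflationMul hres β β
  rw [hβ.charForm_self] at hnorm
  obtain ⟨V, -, rfl⟩ := hχ
  obtain ⟨W, -, rfl⟩ := hβ
  let U : FDRep ℂ G := (Action.res _ (QuotientGroup.mk' N)).obj W ⊗ V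
  have hU : U.character = inflationMul V.character W.character := FDRep.char_tensor _ _
  rw [← hU] at hnorm ⊢
  exact ⟨U, (simple_iff_charForm_self U).mpr hnorm, rfl⟩

theorem injOn_inflationMul (hχ : IsIrrChar G χ) (hres : IsIrrChar N (fun n : N ↦ χ n)) :
    Set.InjOn (inflationMul χ) {β : G ⧸ N → ℂ | IsIrrChar (G ⧸ N) β} := by
  have := Fintype.ofFinite G
  have := Fintype.ofFinite (G ⧸ N)
  intro α hα β hβ heq
  by_contra hne
  refine one_ne_zero (α := ℂ) ?_
  calc (1 : ℂ) = charForm ℂ (G ⧸ N) α α := hα.charForm_self.symm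
    _ = charForm ℂ G (inflationMul χ α) (inflationMul χ β) := by
      rw [← heq, hχ.charForm_inflationMul hres]
    _ = charForm ℂ (G ⧸ N) α β := hχ.charForm_inflationMul hres α β
    _ = 0 := hα.charForm_of_ne hβ hne

end IrreducibleRestriction

end IsIrrChar

theorem rel_degree_sum_ge_of_irreducible_restriction
    (G : Type) [Group G] [Finite G] (N : Subgroup G) [N.Normal]
    (χ : G → ℂ) (hχ : IsIrrChar G χ)
    (hres : IsIrrChar N (fun n : N => χ ↑n))
    (hnontriv : (fun n : N => χ ↑n) ≠ (fun _ => 1)) :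
    (χ 1).re * charDegreeSum (G ⧸ N) ≤ relCharDegreeSum G N := by
  calc (χ 1).re * charDegreeSum (G ⧸ N)
      = ∑ᶠ β ∈ {β | IsIrrChar (G ⧸ N) β}, (inflationMul χ β 1).re := by
        simp only [charDegreeSum, mul_finsum_mem, hχ.re_inflationMul_one]
    _ = ∑ᶠ ψ ∈ inflationMul χ '' {β | IsIrrChar (G ⧸ N) β}, (ψ 1).re :=
        (finsum_mem_image (f := fun ψ : G → ℂ ↦ (ψ 1).re) (hχ.injOn_inflationMul hres)).symm
    _ ≤ relCharDegreeSum G N := by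
        refine finsum_mem_le_finsum_mem_of_subset
          ((IsIrrChar.finite_setOf G).subset fun _ hψ ↦ hψ.1) ?_ fun ψ hψ ↦ hψ.1.re_one_pos.le
        rintro _ ⟨β, hβ, rfl⟩
        exact ⟨hχ.inflationMul hres hβ,
          hβ.exists_mem_inflationMul_ne (hres.exists_mem_ne_one hnontriv)⟩
end
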